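/- Let n ≥ 1 and let R be the ring of symmetric Laurent polynomials in x_1,…,x_n over ℂ and V = R[[p]] the ring of formal power series in p with coefficients in R. Let φ = (1,0,…,0,−1) ∈ ℤ^n. Suppose (P_λ)_{λ∈Λ_∞^n} is a family in V of the form P_λ = Σ_{k≥0} p^k Σ_{μ∈Λ_∞^n, μ ≤ λ+kφ} C^{(k)}_{λμ} m_μ, with scalars C^{(k)}_{λμ} ∈ ℂ satisfying C^{(k)}_{λλ} = δ_{k,0} (for each λ and k the index set {μ ∈ Λ_∞^n : μ ≤ λ+kφ} is finite). Then (P_λ) is a Schauder basis of V over ℂ[[p]]: for every f ∈ V there exist unique A_λ ∈ ℂ[[p]] such that for every N ∈ ℕ only finitely many λ satisfy A_λ P_λ ∉ p^{N+1}V, and for each N the coefficient of p^N in f equals the (finite) sum over λ of the coefficients of p^N in A_λ P_λ. -/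

import Mathlib

open Complex

noncomputable section

/-- `μ ∈ Λ_∞^n`: weakly decreasing integer vectors. -/
def Decr (n : ℕ) (μ : Fin n → ℤ) : Prop := ∀ i j : Fin n, i ≤ j → μ j ≤ μ i

/-- The dominance order `μ ≤ l` on `Λ_∞^n`. -/
def domLE (n : ℕ) (μ l : Fin n → ℤ) : Prop :=
  (∀ j : Fin n, ∑ i, (if i ≤ j then μ i else 0) ≤ ∑ i, (if i ≤ j then l i else 0)) ∧
    ∑ i, μ i = ∑ i, l i

/-- The monomial symmetric Laurent polynomial `m_μ`, as a finitely supported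
coefficient function (Laurent polynomial). -/
def mCoeff (n : ℕ) (μ : Fin n → ℤ) : (Fin n → ℤ) →₀ ℂ :=
  ∑ ν ∈ Finset.image (fun σ : Equiv.Perm (Fin n) => μ ∘ σ) Finset.univ, Finsupp.single ν 1

/-- The vector `φ = (1,0,…,0,−1)`. -/
def phiVec (n : ℕ) : Fin n → ℤ := fun i =>
  if (i : ℕ) = 0 then 1 else if (i : ℕ) = n - 1 then -1 else 0

/-!
Comparing coefficients of `p^N` in `f = ∑ A_λ P_λ` gives
`∑_λ A_λ^{(N)} P_λ^{(0)} = f^{(N)} - ∑_{i < N} ∑_λ A_λ^{(i)} P_λ^{(N-i)}`,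
which determines the `A_λ` recursively as soon as the leading coefficients `P_λ^{(0)}` form a basis
of the symmetric Laurent polynomials. A symmetric Laurent polynomial is determined by its
coefficients at dominant weights, and in these coordinates the `P_λ^{(0)}` are unitriangular for the
dominance order. That order is well founded, since only finitely many dominant weights lie below a
given one.
-/

section TriangularRecursion

variable {X M : Type*}

/-- The solution `a` of the triangular system `∑_{i ≤ N} L (N - i) (a i) = f N`, provided that each
equation can be solved for `a N`; a right inverse of `L 0` on its range is chosen by
`Function.invFun`. -/
def convolutionSolution [Nonempty X] [AddCommGroup M] (L : ℕ → X → M) (f : ℕ → M) (N : ℕ) : X :=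
  Function.invFun (L 0) (f N - ∑ i : Fin N, L (N - i) (convolutionSolution L f i))
termination_by N
decreasing_by exact i.2

theorem sum_range_convolutionSolution [Nonempty X] [AddCommGroup M] {L : ℕ → X → M}
    {S : AddSubgroup M} (hL : ∀ k x, L k x ∈ S) (hS : ∀ s ∈ S, ∃ x, L 0 x = s) {f : ℕ → M}
    (hf : ∀ N, f N ∈ S) (N : ℕ) :
    ∑ i ∈ Finset.range (N + 1), L (N - i) (convolutionSolution L f i) = f N := by
  have remainder_mem : f N - ∑ i : Fin N, L (N - i) (convolutionSolution L f i) ∈ S :=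
    S.sub_mem (hf N) (S.sum_mem fun _ _ => hL _ _)
  have solves := Function.invFun_eq (hS _ remainder_mem)
  rw [← convolutionSolution] at solves
  rw [Finset.sum_range_succ, Nat.sub_self, solves, Finset.sum_range, add_sub_cancel]

theorem eq_of_sum_range_convolution_eq [AddCancelCommMonoid M] {L : ℕ → X → M}
    (h0 : Function.Injective (L 0)) {a b : ℕ → X}
    (h : ∀ N, ∑ i ∈ Finset.range (N + 1), L (N - i) (a i) =
      ∑ i ∈ Finset.range (N + 1), L (N - i) (b i)) : a = b := by
  funext N
  induction N using Nat.strong_induction_on with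
  | _ N ih =>
    have lower : ∑ i ∈ Finset.range N, L (N - i) (a i) = ∑ i ∈ Finset.range N, L (N - i) (b i) :=
      Finset.sum_congr rfl fun i hi => by rw [ih i (Finset.mem_range.1 hi)]
    have hN := h N
    rw [Finset.sum_range_succ, Finset.sum_range_succ, lower, Nat.sub_self] at hN
    exact h0 (add_left_cancel hN)

end TriangularRecursion

section SchauderExpansion

variable {R M Λ : Type*} [Semiring R] [AddCommMonoid M] [Module R M]

/-- `f = ∑_λ A_λ P_λ` in `M[[p]]`, the sum converging `p`-adically: modulo `p^{N+1}` only finitely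
many `A_λ P_λ` are nonzero, and the coefficients of every `p^N` agree. Power series over `M` and
over `R` are encoded by their coefficient sequences. -/
def IsSchauderExpansion (P : Λ → ℕ → M) (A : Λ → ℕ → R) (f : ℕ → M) : Prop :=
  (∀ N : ℕ, {l | ∃ m ≤ N, (∑ i ∈ Finset.range (m + 1), A l i • P l (m - i)) ≠ 0}.Finite) ∧
    ∀ N : ℕ, f N = ∑ᶠ l, ∑ i ∈ Finset.range (N + 1), A l i • P l (N - i)

theorem support_smul_subset (c : Λ →₀ R) (v : Λ → M) :
    (Function.support fun l => c l • v l) ⊆ c.support := fun _ hl =>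
  Finsupp.mem_support_iff.2 (left_ne_zero_of_smul hl)

theorem finsum_smul_eq_linearCombination (c : Λ →₀ R) (v : Λ → M) :
    ∑ᶠ l, c l • v l = Finsupp.linearCombination R v c :=
  finsum_eq_sum_of_support_subset _ (support_smul_subset c v)

theorem finsum_sum_range_smul (P : Λ → ℕ → M) (a : ℕ → Λ →₀ R) (N : ℕ) :
    ∑ᶠ l, ∑ i ∈ Finset.range (N + 1), a i l • P l (N - i) =
      ∑ i ∈ Finset.range (N + 1), Finsupp.linearCombination R (fun l => P l (N - i)) (a i) := by
  have finite_support (i : ℕ) : (Function.support fun l => a i l • P l (N - i)).Finite :=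
    (a i).support.finite_toSet.subset (support_smul_subset (a i) _)
  rw [finsum_sum_comm _ _ fun i _ => finite_support i]
  simp only [finsum_smul_eq_linearCombination]

theorem finite_setOf_exists_sum_range_smul_ne_zero (P : Λ → ℕ → M) (a : ℕ → Λ →₀ R) (N : ℕ) :
    {l | ∃ m ≤ N, ∑ i ∈ Finset.range (m + 1), a i l • P l (m - i) ≠ 0}.Finite := by
  classical
  refine ((Finset.range (N + 1)).biUnion fun i => (a i).support).finite_toSet.subset ?_
  rintro l ⟨m, hm, hsum⟩
  obtain ⟨i, hi, hterm⟩ := Finset.exists_ne_zero_of_sum_ne_zero hsum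
  exact Finset.mem_biUnion.2 ⟨i, Finset.range_mono (Nat.succ_le_succ hm) hi,
    Finsupp.mem_support_iff.2 (left_ne_zero_of_smul hterm)⟩

theorem eq_zero_of_sum_range_smul_eq_zero {c : ℕ → R} {v : ℕ → M}
    (h0 : ∀ r : R, r • v 0 = 0 → r = 0) {N : ℕ}
    (h : ∀ m ≤ N, ∑ i ∈ Finset.range (m + 1), c i • v (m - i) = 0) : ∀ m ≤ N, c m = 0 := by
  intro m
  induction m using Nat.strong_induction_on with
  | _ m ih =>
    intro hm
    have lower : ∑ i ∈ Finset.range m, c i • v (m - i) = 0 := Finset.sum_eq_zero fun i hi => by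
      have him := Finset.mem_range.1 hi
      rw [ih i him (him.le.trans hm), zero_smul]
    have top := h m hm
    rw [Finset.sum_range_succ, lower, zero_add, Nat.sub_self] at top
    exact h0 _ top

theorem IsSchauderExpansion.finite_support {P : Λ → ℕ → M} {A : Λ → ℕ → R} {f : ℕ → M}
    (hli : LinearIndependent R fun l => P l 0) (hA : IsSchauderExpansion P A f) (N : ℕ) :
    (Function.support fun l => A l N).Finite := by
  refine (hA.1 N).subset fun l hl => ?_
  by_contra hzero
  simp only [Set.mem_ofPred_eq, not_exists, not_and, not_not] at hzero
  have smul_injective (r : R) (hr : r • P l 0 = 0) : r = 0 :=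
    Finsupp.single_eq_zero.1 (hli (a₁ := Finsupp.single l r) (a₂ := 0) (by simpa using hr))
  exact hl (eq_zero_of_sum_range_smul_eq_zero smul_injective hzero N le_rfl)

theorem isSchauderExpansion_iff {P : Λ → ℕ → M} (hli : LinearIndependent R fun l => P l 0)
    {A : Λ → ℕ → R} {f : ℕ → M} :
    IsSchauderExpansion P A f ↔ ∃ a : ℕ → Λ →₀ R, (A = fun l i => a i l) ∧
      ∀ N, ∑ i ∈ Finset.range (N + 1), Finsupp.linearCombination R (fun l => P l (N - i)) (a i) =
        f N := by
  constructor
  · intro hA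
    let a (N : ℕ) : Λ →₀ R := Finsupp.ofSupportFinite (fun l => A l N) (hA.finite_support hli N)
    exact ⟨a, rfl, fun N => (finsum_sum_range_smul P a N).symm.trans (hA.2 N).symm⟩
  · rintro ⟨a, rfl, ha⟩
    exact ⟨finite_setOf_exists_sum_range_smul_ne_zero P a,
      fun N => (ha N).symm.trans (finsum_sum_range_smul P a N).symm⟩

theorem existsUnique_isSchauderExpansion {R M Λ : Type*} [Ring R] [AddCommGroup M] [Module R M]
    {P : Λ → ℕ → M} {f : ℕ → M} (hli : LinearIndependent R fun l => P l 0)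
    (hP : ∀ l k, P l k ∈ Submodule.span R (Set.range fun l => P l 0))
    (hf : ∀ N, f N ∈ Submodule.span R (Set.range fun l => P l 0)) :
    ∃! A : Λ → ℕ → R, IsSchauderExpansion P A f := by
  let S := Submodule.span R (Set.range fun l => P l 0)
  let L (k : ℕ) : (Λ →₀ R) → M := Finsupp.linearCombination R fun l => P l k
  have L_mem (k : ℕ) (c : Λ →₀ R) : L k c ∈ S :=
    S.sum_mem fun l _ => S.smul_mem (c l) (hP l k)
  have L_zero_surj (s : M) (hs : s ∈ S) : ∃ c, L 0 c = s :=
    Finsupp.mem_span_range_iff_exists_finsupp.1 hs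
  have hsol := sum_range_convolutionSolution (S := S.toAddSubgroup) L_mem L_zero_surj hf
  refine ⟨_, (isSchauderExpansion_iff hli).2 ⟨convolutionSolution L f, rfl, hsol⟩, ?_⟩
  intro B hB
  obtain ⟨b, rfl, hb⟩ := (isSchauderExpansion_iff hli).1 hB
  rw [eq_of_sum_range_convolution_eq (L := L) hli fun N => (hb N).trans (hsol N).symm]

end SchauderExpansion

section Unitriangular

theorem mem_of_forall_single_one_mem {R Λ : Type*} [Semiring R] {S : Submodule R (Λ →₀ R)}
    {c : Λ →₀ R} (h : ∀ l ∈ c.support, Finsupp.single l 1 ∈ S) : c ∈ S := by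
  rw [← Finsupp.sum_single c]
  refine Submodule.sum_mem _ fun l hl => ?_
  rw [← Finsupp.smul_single_one]
  exact S.smul_mem _ (h l hl)

variable {R Λ : Type*} [Ring R] [PartialOrder Λ] {u : Λ → Λ →₀ R}

theorem linearIndependent_of_unitriangular (hdiag : ∀ l, u l l = 1)
    (htri : ∀ l μ, u l μ ≠ 0 → μ ≤ l) : LinearIndependent R u := by
  rw [linearIndependent_iff]
  intro c hc
  by_contra hne
  obtain ⟨l, hl⟩ := c.support.exists_maximal (Finsupp.support_nonempty_iff.2 hne)
  have off_diagonal (μ : Λ) (hμ : μ ∈ c.support) (hμl : μ ≠ l) : (c μ • u μ) l = 0 := by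
    rw [Finsupp.smul_apply]
    by_contra h
    exact hμl (hl.eq_of_le hμ (htri μ l (right_ne_zero_of_smul h))).symm
  have coeff : c l = 0 := by
    calc c l = (c l • u l) l := by rw [Finsupp.smul_apply, hdiag, smul_eq_mul, mul_one]
      _ = ∑ μ ∈ c.support, (c μ • u μ) l :=
        (Finset.sum_eq_single_of_mem l hl.prop off_diagonal).symm
      _ = Finsupp.linearCombination R u c l := by
        rw [Finsupp.linearCombination_apply, Finsupp.sum, Finsupp.finsetSum_apply]
      _ = 0 := by rw [hc, Finsupp.zero_apply]
  exact Finsupp.mem_support_iff.1 hl.prop coeff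

theorem span_eq_top_of_unitriangular [WellFoundedLT Λ] (hdiag : ∀ l, u l l = 1)
    (htri : ∀ l μ, u l μ ≠ 0 → μ ≤ l) : Submodule.span R (Set.range u) = ⊤ := by
  classical
  have single_mem (l : Λ) : Finsupp.single l 1 ∈ Submodule.span R (Set.range u) := by
    induction l using WellFoundedLT.induction with
    | _ l ih =>
      have split : Finsupp.single l 1 + (u l).erase l = u l := by
        rw [← hdiag l, Finsupp.single_add_erase]
      rw [eq_sub_of_add_eq split]
      refine Submodule.sub_mem _ (Submodule.subset_span ⟨l, rfl⟩) ?_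
      refine mem_of_forall_single_one_mem fun μ hμ => ?_
      rw [Finsupp.support_erase, Finset.mem_erase, Finsupp.mem_support_iff] at hμ
      exact ih μ (lt_of_le_of_ne (htri l μ hμ.2) hμ.1)
  exact eq_top_iff.2 fun c _ => mem_of_forall_single_one_mem fun l _ => single_mem l

end Unitriangular

section DominanceOrder

theorem eq_of_forall_sum_Iic_eq {ι G : Type*} [PartialOrder ι] [LocallyFiniteOrderBot ι]
    [WellFoundedLT ι] [AddCancelCommMonoid G] {f g : ι → G}
    (h : ∀ j, ∑ i ∈ Finset.Iic j, f i = ∑ i ∈ Finset.Iic j, g i) : f = g := by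
  funext j
  induction j using WellFoundedLT.induction with
  | _ j ih =>
    have lower : ∑ i ∈ Finset.Iio j, f i = ∑ i ∈ Finset.Iio j, g i :=
      Finset.sum_congr rfl fun i hi => ih i (Finset.mem_Iio.1 hi)
    have hj := h j
    rw [← Finset.sum_Iio_add_eq_sum_Iic, ← Finset.sum_Iio_add_eq_sum_Iic, lower] at hj
    exact add_left_cancel hj

variable {n : ℕ}

theorem domLE_iff_sum_Iic {μ l : Fin n → ℤ} :
    domLE n μ l ↔ (∀ j, ∑ i ∈ Finset.Iic j, μ i ≤ ∑ i ∈ Finset.Iic j, l i) ∧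
      ∑ i, μ i = ∑ i, l i := by
  simp only [domLE, ← Finset.sum_filter, Finset.filter_ge_eq_Iic]

theorem domLE_antisymm {μ l : Fin n → ℤ} (h : domLE n μ l) (h' : domLE n l μ) : μ = l :=
  eq_of_forall_sum_Iic_eq fun j =>
    le_antisymm ((domLE_iff_sum_Iic.1 h).1 j) ((domLE_iff_sum_Iic.1 h').1 j)

/-- The set `Λ_∞^n` of dominant weights. It is not reducible to the subtype, because that carries
the pointwise order of `Fin n → ℤ`, whereas `DominantWeight n` is ordered by dominance. -/
def DominantWeight (n : ℕ) : Type := {l : Fin n → ℤ // Decr n l}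

namespace DominantWeight

instance : PartialOrder (DominantWeight n) where
  le μ l := domLE n μ.1 l.1
  le_refl _ := ⟨fun _ => le_rfl, rfl⟩
  le_trans _ _ _ h h' := ⟨fun j => (h.1 j).trans (h'.1 j), h.2.trans h'.2⟩
  le_antisymm _ _ h h' := Subtype.ext (domLE_antisymm h h')

theorem coe_le_of_le {μ l : DominantWeight (n + 1)} (h : μ ≤ l) (i : Fin (n + 1)) :
    μ.1 i ≤ l.1 0 :=
  calc μ.1 i ≤ μ.1 0 := μ.2 0 i (Fin.zero_le i)
    _ ≤ l.1 0 := by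
      have Iic_zero : Finset.Iic (0 : Fin (n + 1)) = {0} := Finset.Iic_bot
      simpa only [Iic_zero, Finset.sum_singleton] using (domLE_iff_sum_Iic.1 h).1 0

theorem le_coe_of_le {μ l : DominantWeight (n + 1)} (h : μ ≤ l) (i : Fin (n + 1)) :
    ∑ j, l.1 j - n * l.1 0 ≤ μ.1 i := by
  have others : ∑ j ∈ Finset.univ.erase i, μ.1 j ≤ n * l.1 0 := by
    simpa using Finset.sum_le_card_nsmul (Finset.univ.erase i) μ.1 _ fun j _ => coe_le_of_le h j
  have total : μ.1 i + ∑ j ∈ Finset.univ.erase i, μ.1 j = ∑ j, l.1 j :=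
    (Finset.add_sum_erase _ _ (Finset.mem_univ i)).trans h.2
  linarith

theorem finite_Iic (l : DominantWeight n) : (Set.Iic l).Finite := by
  cases n with
  | zero =>
    exact Set.finite_univ.of_injOn (Set.mapsTo_univ _ _) Subtype.val_injective.injOn
  | succ n =>
    refine ((Set.finite_Icc (fun _ => ∑ j, l.1 j - n * l.1 0) fun _ => l.1 0).preimage
      Subtype.val_injective.injOn).subset fun μ hμ => ?_
    exact ⟨le_coe_of_le hμ, coe_le_of_le hμ⟩

instance : WellFoundedLT (DominantWeight n) :=
  StrictMono.wellFoundedLT (f := fun l : DominantWeight n => (Set.Iic l).ncard) fun _ l h =>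
    Set.ncard_lt_ncard (Set.Iic_ssubset_Iic.2 h) l.finite_Iic

theorem exists_decr_comp_perm (ν : Fin n → ℤ) : ∃ σ : Equiv.Perm (Fin n), Decr n (ν ∘ σ) :=
  ⟨Tuple.sort (OrderDual.toDual ∘ ν), fun _ _ hij =>
    Tuple.monotone_sort (OrderDual.toDual ∘ ν) hij⟩

theorem eq_of_comp_perm_eq {μ ν : DominantWeight n} {σ : Equiv.Perm (Fin n)}
    (h : μ.1 ∘ σ = ν.1) : μ = ν := by
  have hμ : Antitone (μ.1 ∘ Equiv.refl (Fin n)) := fun i j => μ.2 i j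
  have hν : Antitone (μ.1 ∘ σ) := fun i j => h ▸ ν.2 i j
  exact Subtype.ext ((Tuple.unique_antitone hμ hν).trans h)

end DominantWeight

end DominanceOrder

section SymmetricLaurent

variable {R : Type*} [Semiring R] {n : ℕ}

variable (R n) in
/-- The module of symmetric Laurent polynomials in `n` variables over `R`, encoded by their
coefficient functions on exponents. -/
def symmetricLaurent : Submodule R ((Fin n → ℤ) →₀ R) where
  carrier := {f | ∀ (σ : Equiv.Perm (Fin n)) (ν : Fin n → ℤ), f (ν ∘ σ) = f ν}
  zero_mem' _ _ := rfl
  add_mem' hf hg σ ν := by rw [Finsupp.add_apply, Finsupp.add_apply, hf, hg]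
  smul_mem' c f hf σ ν := by rw [Finsupp.smul_apply, Finsupp.smul_apply, hf]

variable (R n) in
/-- The coefficients of a Laurent polynomial at the dominant exponents. On symmetric Laurent
polynomials these are the coordinates in the basis of monomial symmetric ones. -/
def dominantPart : ((Fin n → ℤ) →₀ R) →ₗ[R] (DominantWeight n →₀ R) :=
  Finsupp.lcomapDomain Subtype.val Subtype.val_injective

theorem dominantPart_apply (f : (Fin n → ℤ) →₀ R) (l : DominantWeight n) :
    dominantPart R n f l = f l.1 := rfl

theorem injOn_dominantPart : Set.InjOn (dominantPart R n) (symmetricLaurent R n) := by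
  intro f hf g hg h
  ext ν
  obtain ⟨σ, hσ⟩ := DominantWeight.exists_decr_comp_perm ν
  rw [← hf σ ν, ← hg σ ν]
  exact DFunLike.congr_fun h ⟨_, hσ⟩

theorem span_eq_symmetricLaurent {Λ : Type*} {v : Λ → (Fin n → ℤ) →₀ R}
    (hv : ∀ l, v l ∈ symmetricLaurent R n)
    (hspan : Submodule.span R (Set.range fun l => dominantPart R n (v l)) = ⊤) :
    Submodule.span R (Set.range v) = symmetricLaurent R n := by
  have span_le : Submodule.span R (Set.range v) ≤ symmetricLaurent R n :=
    Submodule.span_le.2 (Set.range_subset_iff.2 hv)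
  refine le_antisymm span_le fun s hs => ?_
  have map_span : (Submodule.span R (Set.range v)).map (dominantPart R n) = ⊤ := by
    rw [Submodule.map_span, ← Set.range_comp]
    exact hspan
  obtain ⟨t, ht, hts⟩ : dominantPart R n s ∈ (Submodule.span R (Set.range v)).map _ :=
    map_span ▸ Submodule.mem_top
  exact injOn_dominantPart (span_le ht) hs hts ▸ ht

theorem schauder_basis_elliptic_macdonald_general {R : Type*} [Ring R] {n : ℕ}
    {P : DominantWeight n → ℕ → (Fin n → ℤ) →₀ R}
    (hsymm : ∀ l k, P l k ∈ symmetricLaurent R n) (hdiag : ∀ l, P l 0 l.1 = 1)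
    (htri : ∀ l μ : DominantWeight n, P l 0 μ.1 ≠ 0 → domLE n μ.1 l.1)
    {f : ℕ → (Fin n → ℤ) →₀ R} (hf : ∀ N, f N ∈ symmetricLaurent R n) :
    ∃! A : DominantWeight n → ℕ → R, IsSchauderExpansion P A f := by
  have span_leading : Submodule.span R (Set.range fun l => P l 0) = symmetricLaurent R n :=
    span_eq_symmetricLaurent (fun l => hsymm l 0) (span_eq_top_of_unitriangular hdiag htri)
  refine existsUnique_isSchauderExpansion ?_ ?_ ?_
  · exact .of_comp (dominantPart R n) (linearIndependent_of_unitriangular hdiag htri)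
  · simpa only [span_leading] using hsymm
  · simpa only [span_leading] using hf

end SymmetricLaurent

section MonomialSymmetric

variable {n : ℕ}

open scoped Classical in
theorem mCoeff_apply (μ ν : Fin n → ℤ) :
    mCoeff n μ ν = if ∃ σ : Equiv.Perm (Fin n), μ ∘ σ = ν then 1 else 0 := by
  simp [mCoeff, Finsupp.finsetSum_apply, Finsupp.single_apply]

theorem mCoeff_mem_symmetricLaurent (μ : Fin n → ℤ) : mCoeff n μ ∈ symmetricLaurent ℂ n := by
  intro σ ν
  have orbit_iff : (∃ τ : Equiv.Perm (Fin n), μ ∘ τ = ν ∘ σ) ↔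
      ∃ τ : Equiv.Perm (Fin n), μ ∘ τ = ν :=
    (Equiv.mulRight σ⁻¹).exists_congr fun τ => by
      rw [Equiv.coe_mulRight, Equiv.Perm.coe_mul, ← Function.comp_assoc]
      exact (Equiv.comp_symm_eq σ ν (μ ∘ τ)).symm
  simp only [mCoeff_apply, orbit_iff]

theorem dominantPart_mCoeff (μ : DominantWeight n) :
    dominantPart ℂ n (mCoeff n μ.1) = Finsupp.single μ 1 := by
  classical
  ext ν
  have orbit_iff : (∃ σ : Equiv.Perm (Fin n), μ.1 ∘ σ = ν.1) ↔ μ = ν :=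
    ⟨fun ⟨_, h⟩ => DominantWeight.eq_of_comp_perm_eq h, fun h => ⟨1, congrArg Subtype.val h⟩⟩
  simp only [dominantPart_apply, mCoeff_apply, orbit_iff, Finsupp.single_apply]

theorem finsum_smul_mCoeff_mem_symmetricLaurent (c : DominantWeight n → ℂ) :
    ∑ᶠ μ, c μ • mCoeff n μ.1 ∈ symmetricLaurent ℂ n :=
  finsum_induction (· ∈ symmetricLaurent ℂ n) (Submodule.zero_mem _)
    (fun _ _ => Submodule.add_mem _) fun _ =>
      Submodule.smul_mem _ _ (mCoeff_mem_symmetricLaurent _)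

theorem finsum_smul_mCoeff_apply {c : DominantWeight n → ℂ} (hc : c.support.Finite)
    (μ : DominantWeight n) : (∑ᶠ ν, c ν • mCoeff n ν.1) μ.1 = c μ := by
  let c' : DominantWeight n →₀ ℂ := Finsupp.ofSupportFinite c hc
  have expand : ∑ᶠ ν, c ν • mCoeff n ν.1 = Finsupp.linearCombination ℂ (fun ν => mCoeff n ν.1) c' :=
    finsum_smul_eq_linearCombination c' _
  have coords : dominantPart ℂ n (∑ᶠ ν, c ν • mCoeff n ν.1) = c' := by
    rw [expand, Finsupp.apply_linearCombination]
    simp only [Function.comp_def, dominantPart_mCoeff, Finsupp.linearCombination_apply,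
      Finsupp.smul_single_one, Finsupp.sum_single]
  exact DFunLike.congr_fun coords μ

end MonomialSymmetric

/-- a family `(P_λ)` of formal power series in `p` with symmetric Laurent
polynomial coefficients, which is triangular in the sense of Langmann–Noumi–Shiraishi, is a
Schauder basis of `V = R[[p]]` over `ℂ[[p]]`.  Elements of `V` are encoded as functions
`ℕ → ((Fin n → ℤ) →₀ ℂ)` (the coefficient of `p^k` being a Laurent polynomial), and
elements of `ℂ[[p]]` as functions `ℕ → ℂ`. -/
theorem schauder_basis_elliptic_macdonald (n : ℕ) (hn : 1 ≤ n)
    (P : {l : Fin n → ℤ // Decr n l} → ℕ → ((Fin n → ℤ) →₀ ℂ))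
    (C : {l : Fin n → ℤ // Decr n l} → ℕ → {l : Fin n → ℤ // Decr n l} → ℂ)
    (hsupp : ∀ l k μ, C l k μ ≠ 0 → domLE n μ.1 (fun i => l.1 i + (k : ℤ) * phiVec n i))
    (hfin : ∀ (l : {l : Fin n → ℤ // Decr n l}) (k : ℕ),
      {μ : {l : Fin n → ℤ // Decr n l} |
        domLE n μ.1 (fun i => l.1 i + (k : ℤ) * phiVec n i)}.Finite)
    (hdiag : ∀ l k, C l k l = if k = 0 then 1 else 0)
    (hPdef : ∀ l k, P l k = ∑ᶠ μ, C l k μ • mCoeff n μ.1)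
    (f : ℕ → ((Fin n → ℤ) →₀ ℂ))
    (hf : ∀ (N : ℕ) (σ : Equiv.Perm (Fin n)) (ν : Fin n → ℤ), f N (ν ∘ σ) = f N ν) :
    ∃! A : {l : Fin n → ℤ // Decr n l} → ℕ → ℂ,
      (∀ N : ℕ, {l | ∃ m ≤ N,
        (∑ i ∈ Finset.range (m + 1), A l i • P l (m - i)) ≠ 0}.Finite) ∧
      ∀ N : ℕ, f N = ∑ᶠ l, ∑ i ∈ Finset.range (N + 1), A l i • P l (N - i) := by
  have hcoeff (l μ : {l : Fin n → ℤ // Decr n l}) : P l 0 μ.1 = C l 0 μ := by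
    rw [hPdef]
    exact finsum_smul_mCoeff_apply ((hfin l 0).subset (hsupp l 0)) μ
  refine schauder_basis_elliptic_macdonald_general (P := P) ?_ ?_ ?_ hf
  · exact fun l k => hPdef l k ▸ finsum_smul_mCoeff_mem_symmetricLaurent (C l k)
  · exact fun l => (hcoeff l l).trans (hdiag l 0)
  · exact fun l μ h => by simpa using hsupp l 0 μ (hcoeff l μ ▸ h)
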